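/- Let G=(V,E) be a graph, let S ⊆ V, and let (L^S, X^S, R^S) be a partition of S into (possibly empty) parts. Then (L^S, X^S, R^S) is an S-trace of G if and only if there is no path in the graph G[S] − X^S from a vertex of L^S to a vertex of R^S. -/

import Mathlib

/-! Preliminary definitions: rooted tree decompositions, `S`-traces, `S`-nice and
slim tree decompositions, following Chapelle et al. -/

/-- A walk in `G` all of whose vertices lie in the set `W`. -/
def SimpleGraph.ReachableIn {V : Type} (G : SimpleGraph V) (W : Set V) (u v : V) : Prop :=
  ∃ p : G.Walk u v, ∀ x ∈ p.support, x ∈ W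

/-- The open neighborhood of a set of vertices. -/
def SimpleGraph.nbhdSet {V : Type} (G : SimpleGraph V) (W : Set V) : Set V :=
  {x | x ∉ W ∧ ∃ w ∈ W, G.Adj w x}

/-- The vertex set of the connected component of `G − X` that contains `v`
(assuming `v ∉ X`). -/
def SimpleGraph.compOutside {V : Type} (G : SimpleGraph V) (X : Set V) (v : V) : Set V :=
  {w | G.ReachableIn Xᶜ v w}

/-- A rooted tree decomposition of a graph `G` on vertex type `V`, with node type `ι`.
The rooted tree is given by a parent function: the root is a fixed point of `parent`
and every node reaches the root by iterating `parent`.  The bags satisfy the three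
usual conditions of a tree decomposition; connectedness of `{t | v ∈ bag t}` is
expressed by the existence of a highest node `m` containing `v` such that from any
node whose bag contains `v` the whole ancestor chain up to `m` contains `v`. -/
structure RootedTreeDecomp (V ι : Type) (G : SimpleGraph V) where
  root : ι
  parent : ι → ι
  parent_root : parent root = root
  reaches_root : ∀ t : ι, ∃ n : ℕ, parent^[n] t = root
  bag : ι → Set V
  bags_cover : ∀ v : V, ∃ t : ι, v ∈ bag t
  bags_of_edges : ∀ ⦃u v : V⦄, G.Adj u v → ∃ t : ι, u ∈ bag t ∧ v ∈ bag t
  bags_connected : ∀ v : V, ∃ m : ι, v ∈ bag m ∧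
    ∀ t : ι, v ∈ bag t → ∃ n : ℕ, parent^[n] t = m ∧ ∀ i ≤ n, v ∈ bag (parent^[i] t)

namespace RootedTreeDecomp

variable {V ι : Type} {G : SimpleGraph V}

/-- `t'` lies in the subtree `T_t` rooted at `t`; equivalently, `t` is an
ancestor (possibly equal) of `t'`. -/
def InSubtree (𝒯 : RootedTreeDecomp V ι G) (t t' : ι) : Prop :=
  ∃ n : ℕ, 𝒯.parent^[n] t' = t

/-- `t` is the parent of `t'`. -/
def IsParent (𝒯 : RootedTreeDecomp V ι G) (t t' : ι) : Prop :=
  t' ≠ 𝒯.root ∧ 𝒯.parent t' = t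

/-- `V_t`: the union of the bags of the nodes of the subtree rooted at `t`. -/
def Vt (𝒯 : RootedTreeDecomp V ι G) (t : ι) : Set V :=
  {v | ∃ t', 𝒯.InSubtree t t' ∧ v ∈ 𝒯.bag t'}

/-- `L_t = V_t ∖ X_t`. -/
def Lt (𝒯 : RootedTreeDecomp V ι G) (t : ι) : Set V := 𝒯.Vt t \ 𝒯.bag t

/-- `R_t = V ∖ V_t`. -/
def Rt (𝒯 : RootedTreeDecomp V ι G) (t : ι) : Set V := (𝒯.Vt t)ᶜ

/-- `L_t^S = L_t ∩ S`. -/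
def LS (𝒯 : RootedTreeDecomp V ι G) (S : Set V) (t : ι) : Set V := 𝒯.Lt t ∩ S

/-- `X_t^S = X_t ∩ S`. -/
def XS (𝒯 : RootedTreeDecomp V ι G) (S : Set V) (t : ι) : Set V := 𝒯.bag t ∩ S

/-- `R_t^S = R_t ∩ S`. -/
def RS (𝒯 : RootedTreeDecomp V ι G) (S : Set V) (t : ι) : Set V := 𝒯.Rt t ∩ S

/-- The `S`-trace of a node `t`. -/
def STrace (𝒯 : RootedTreeDecomp V ι G) (S : Set V) (t : ι) : Set V × Set V × Set V :=
  (𝒯.LS S t, 𝒯.XS S t, 𝒯.RS S t)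

/-- Every bag has size at most `k + 1`, i.e. the width is at most `k`. -/
def WidthAtMost (𝒯 : RootedTreeDecomp V ι G) (k : ℕ) : Prop :=
  ∀ t : ι, (𝒯.bag t).ncard ≤ k + 1

/-- The width of the decomposition (max bag size minus one) is exactly `k`. -/
def HasWidth (𝒯 : RootedTreeDecomp V ι G) (k : ℕ) : Prop :=
  𝒯.WidthAtMost k ∧ ∃ t : ι, (𝒯.bag t).ncard = k + 1

/-- `t'` is an `S`-child of `t`. -/
def IsSChild (𝒯 : RootedTreeDecomp V ι G) (S : Set V) (t t' : ι) : Prop :=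
  𝒯.IsParent t t' ∧ ((𝒯.LS S t' ∪ 𝒯.XS S t') \ (𝒯.RS S t ∪ 𝒯.XS S t)).Nonempty

/-- `t` is an `S`-bottom node: `L_t^S ≠ ∅` and `t` is the bottom node of the
directed path of its own `S`-trace (every node with the same `S`-trace is an
ancestor of `t`). -/
def IsSBottom (𝒯 : RootedTreeDecomp V ι G) (S : Set V) (t : ι) : Prop :=
  (𝒯.LS S t).Nonempty ∧ ∀ t', 𝒯.STrace S t' = 𝒯.STrace S t → 𝒯.InSubtree t' t

/-- `t` admits the `S`-operation `introduce(v)`. -/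
def AdmitsIntroduce (𝒯 : RootedTreeDecomp V ι G) (S : Set V) (t : ι) (v : V) : Prop :=
  ∃ t₁, 𝒯.IsSChild S t t₁ ∧ (∀ t₂, 𝒯.IsSChild S t t₂ → t₂ = t₁) ∧
    v ∈ S ∧ v ∉ 𝒯.bag t₁ ∧ 𝒯.XS S t = 𝒯.XS S t₁ ∪ {v}

/-- `t` admits the `S`-operation `forget(v)`. -/
def AdmitsForget (𝒯 : RootedTreeDecomp V ι G) (S : Set V) (t : ι) (v : V) : Prop :=
  ∃ t₁, 𝒯.IsSChild S t t₁ ∧ (∀ t₂, 𝒯.IsSChild S t t₂ → t₂ = t₁) ∧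
    v ∈ S ∧ v ∈ 𝒯.bag t₁ ∧ 𝒯.XS S t = 𝒯.XS S t₁ \ {v}

/-- `t` admits the `S`-operation `join` with the two `S`-children `t₁, t₂`. -/
def AdmitsJoin (𝒯 : RootedTreeDecomp V ι G) (S : Set V) (t t₁ t₂ : ι) : Prop :=
  t₁ ≠ t₂ ∧ 𝒯.IsSChild S t t₁ ∧ 𝒯.IsSChild S t t₂ ∧
    (∀ t₃, 𝒯.IsSChild S t t₃ → t₃ = t₁ ∨ t₃ = t₂) ∧
    𝒯.XS S t₁ ∪ 𝒯.XS S t₂ ⊆ 𝒯.XS S t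

/-- `S`-nice tree decomposition: bags along tree edges are comparable and differ in
size by at most one, and every `S`-bottom node admits one of the `S`-operations. -/
def IsSNice (𝒯 : RootedTreeDecomp V ι G) (S : Set V) : Prop :=
  (∀ t t' : ι, 𝒯.IsParent t' t →
      (𝒯.bag t ⊆ 𝒯.bag t' ∨ 𝒯.bag t' ⊆ 𝒯.bag t) ∧
      (𝒯.bag t).ncard ≤ (𝒯.bag t').ncard + 1 ∧ (𝒯.bag t').ncard ≤ (𝒯.bag t).ncard + 1) ∧
  ∀ t : ι, 𝒯.IsSBottom S t →
    (∃ v, 𝒯.AdmitsIntroduce S t v) ∨ (∃ v, 𝒯.AdmitsForget S t v) ∨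
      (∃ t₁ t₂, 𝒯.AdmitsJoin S t t₁ t₂)

/-- Nice tree decomposition: root and leaves have empty bags, and every internal
node is an introduce, forget, or join node. -/
def IsNice (𝒯 : RootedTreeDecomp V ι G) : Prop :=
  𝒯.bag 𝒯.root = ∅ ∧
  (∀ t : ι, (∀ t', ¬𝒯.IsParent t t') → 𝒯.bag t = ∅) ∧
  ∀ t : ι, (∃ t', 𝒯.IsParent t t') →
    (∃ t', 𝒯.IsParent t t' ∧ (∀ t'', 𝒯.IsParent t t'' → t'' = t') ∧
      ((∃ v, v ∉ 𝒯.bag t' ∧ 𝒯.bag t = 𝒯.bag t' ∪ {v}) ∨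
        (∃ v, v ∈ 𝒯.bag t' ∧ 𝒯.bag t = 𝒯.bag t' \ {v}))) ∨
    (∃ t₁ t₂, t₁ ≠ t₂ ∧ 𝒯.IsParent t t₁ ∧ 𝒯.IsParent t t₂ ∧
      (∀ t₃, 𝒯.IsParent t t₃ → t₃ = t₁ ∨ t₃ = t₂) ∧
      𝒯.bag t = 𝒯.bag t₁ ∧ 𝒯.bag t = 𝒯.bag t₂)

/-- A set of nodes inducing a connected subtree of the tree: it contains a node `m`
such that from every node of the set the whole ancestor chain up to `m` stays in
the set. -/
def ConnectedNodeSet (𝒯 : RootedTreeDecomp V ι G) (A : Set ι) : Prop :=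
  ∃ m ∈ A, ∀ t ∈ A, ∃ n : ℕ, 𝒯.parent^[n] t = m ∧ ∀ i ≤ n, 𝒯.parent^[i] t ∈ A

/-- A full join tree: a non-trivial inclusion-maximal connected set of nodes all of
which share one and the same full bag `X` (of size `k + 1`). -/
def IsFullJoinTree (𝒯 : RootedTreeDecomp V ι G) (k : ℕ) (A : Set ι) (X : Set V) : Prop :=
  A.Nontrivial ∧ 𝒯.ConnectedNodeSet A ∧ X.ncard = k + 1 ∧ (∀ t ∈ A, 𝒯.bag t = X) ∧
  ∀ A' : Set ι, A ⊆ A' → 𝒯.ConnectedNodeSet A' → (∀ t ∈ A', 𝒯.bag t = X) → A' = A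

/-- `m` is the root (top node) of the node set `A`. -/
def IsTopOf (𝒯 : RootedTreeDecomp V ι G) (A : Set ι) (m : ι) : Prop :=
  m ∈ A ∧ ∀ t ∈ A, 𝒯.InSubtree m t

/-- The condition on a pair `(u, ti)` appearing in condition (7) of slimness:
either `ti` belongs to `T'_C` (it is an `S`-child of a node of the full join tree
`A` but is not itself in `A`) and `u ∈ V_{ti}`, or `ti` is the parent of the root
`tr` of the full join tree and `u ∈ V ∖ V_{tr}`. -/
def FullJoinBranch (𝒯 : RootedTreeDecomp V ι G) (S : Set V) (A : Set ι) (tr : ι)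
    (u : V) (ti : ι) : Prop :=
  (ti ∉ A ∧ (∃ ta ∈ A, 𝒯.IsSChild S ta ti) ∧ u ∈ 𝒯.Vt ti) ∨
  (tr ≠ 𝒯.root ∧ ti = 𝒯.parent tr ∧ u ∉ 𝒯.Vt tr)

/-- Slim `S`-nice tree decomposition of width `k` (the seven conditions of the
paper; a bag is *full* if it has size `k + 1`). -/
def IsSlim (𝒯 : RootedTreeDecomp V ι G) (S : Set V) (k : ℕ) : Prop :=
  -- (1) the root is not an S-bottom node
  (¬𝒯.IsSBottom S 𝒯.root) ∧
  -- (2) S-bottom nodes with two S-children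
  (∀ t t₁ t₂ : ι, 𝒯.IsSBottom S t → t₁ ≠ t₂ → 𝒯.IsSChild S t t₁ → 𝒯.IsSChild S t t₂ →
    (∃ A X, 𝒯.IsFullJoinTree k A X ∧ t ∈ A) ∨
      ((𝒯.bag t₁).ncard ≠ k + 1 ∧ (𝒯.bag t₂).ncard ≠ k + 1 ∧
        (𝒯.bag t₁).ncard ≤ (𝒯.bag t).ncard ∧ (𝒯.bag t₂).ncard ≤ (𝒯.bag t).ncard ∧
        ∀ tp, 𝒯.IsParent tp t →
          (𝒯.bag tp).ncard ≠ k + 1 ∧ (𝒯.bag tp).ncard ≤ (𝒯.bag t).ncard)) ∧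
  -- (3) S-bottom nodes with a non-full bag
  (∀ t tp : ι, 𝒯.IsSBottom S t → (𝒯.bag t).ncard ≠ k + 1 → 𝒯.IsParent tp t →
    𝒯.bag t = 𝒯.bag tp ∧ ∀ t'', 𝒯.IsSChild S tp t'' → t'' = t) ∧
  -- (4) S-bottom nodes admitting forget(v)
  (∀ t v t', 𝒯.IsSBottom S t → 𝒯.AdmitsForget S t v → 𝒯.IsSChild S t t' →
    (𝒯.bag t').ncard ≠ k + 1 →
    (∀ t₁ t₂, 𝒯.IsSChild S t' t₁ → 𝒯.IsSChild S t' t₂ → t₁ = t₂) ∧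
      ∀ t'', 𝒯.IsSChild S t' t'' → 𝒯.bag t' = 𝒯.bag t'') ∧
  -- (5) parents of S-bottom nodes with non-full bags
  (∀ t tp, 𝒯.IsSBottom S t → 𝒯.IsParent tp t → (𝒯.bag tp).ncard ≠ k + 1 →
    tp = 𝒯.root ∨ ∀ tpp, 𝒯.IsParent tpp tp → ¬𝒯.IsSBottom S tpp) ∧
  -- (6) nodes of full join trees
  (∀ A X, 𝒯.IsFullJoinTree k A X → ∀ t ∈ A,
    𝒯.IsSBottom S t ∧ ∃ t₁ t₂, t₁ ≠ t₂ ∧ 𝒯.IsSChild S t t₁ ∧ 𝒯.IsSChild S t t₂) ∧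
  -- (7) branching condition of full join trees
  (∀ A X tr, 𝒯.IsFullJoinTree k A X → 𝒯.IsTopOf A tr →
    ∀ v ∈ X \ S, ∃ u₁ u₂ u₃ : V, ∃ t₁ t₂ t₃ : ι,
      u₁ ≠ u₂ ∧ u₁ ≠ u₃ ∧ u₂ ≠ u₃ ∧ t₁ ≠ t₂ ∧ t₁ ≠ t₃ ∧ t₂ ≠ t₃ ∧
      (G.Adj v u₁ ∧ u₁ ∉ X ∧ (∃ s ∈ S, G.ReachableIn Xᶜ u₁ s) ∧
        𝒯.FullJoinBranch S A tr u₁ t₁) ∧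
      (G.Adj v u₂ ∧ u₂ ∉ X ∧ (∃ s ∈ S, G.ReachableIn Xᶜ u₂ s) ∧
        𝒯.FullJoinBranch S A tr u₂ t₂) ∧
      (G.Adj v u₃ ∧ u₃ ∉ X ∧ (∃ s ∈ S, G.ReachableIn Xᶜ u₃ s) ∧
        𝒯.FullJoinBranch S A tr u₃ t₃))

end RootedTreeDecomp

/-- `tw(G) ≤ k`: `G` admits a (rooted) tree decomposition of width at most `k`. -/
def SimpleGraph.TreewidthAtMost {V : Type} (G : SimpleGraph V) (k : ℕ) : Prop :=
  ∃ (ι : Type) (𝒯 : RootedTreeDecomp V ι G), 𝒯.WidthAtMost k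

/-!
The bag of a node `t` separates `L_t` from `R_t`: a vertex of `L_t` occurs only in bags of `T_t`,
so all its neighbours lie in `V_t`. A path of `G[S] − X^S` runs inside `L^S ∪ R^S`, hence one from
`L^S` to `R^S` would traverse an edge between the two. Conversely, if there is no such edge, then
the path with bags `V ∖ L^S`, `V ∖ (L^S ∪ R^S)`, `V ∖ R^S`, rooted at its first node, is a tree
decomposition whose middle node has the required trace.
-/

theorem not_exists_reachableIn_union_iff {V : Type} {G : SimpleGraph V} {L R : Set V} :
    (¬∃ l ∈ L, ∃ r ∈ R, G.ReachableIn (L ∪ R) l r) ↔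
      Disjoint L R ∧ ∀ l ∈ L, ∀ r ∈ R, ¬G.Adj l r := by
  constructor
  · intro hpath
    exact ⟨Set.disjoint_left.2 fun v hL hR => hpath ⟨v, hL, v, hR, .nil, by simp [hL]⟩,
      fun l hl r hr hadj => hpath ⟨l, hl, r, hr, hadj.toWalk, by simp [hl, hr]⟩⟩
  · rintro ⟨hLR, hedge⟩ ⟨l, hl, r, hr, p, hp⟩
    obtain ⟨d, hd, hfst, hsnd⟩ := p.exists_boundary_dart L hl (hLR.notMem_of_mem_right hr)
    have hsndR : d.snd ∈ R :=
      (hp d.snd (p.dart_snd_mem_support_of_mem_darts hd)).resolve_left hsnd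
    exact hedge d.fst hfst d.snd hsndR d.adj

namespace RootedTreeDecomp

section Separation

variable {V ι : Type} {G : SimpleGraph V} {𝒯 : RootedTreeDecomp V ι G} {s t : ι} {u v : V}

theorem InSubtree.trans {r : ι} (hrs : 𝒯.InSubtree r s) (hst : 𝒯.InSubtree s t) :
    𝒯.InSubtree r t := by
  obtain ⟨m, rfl⟩ := hrs
  obtain ⟨n, rfl⟩ := hst
  exact ⟨m + n, Function.iterate_add_apply _ m n t⟩

theorem inSubtree_of_mem_Lt_of_mem_bag (hv : v ∈ 𝒯.Lt t) (hvs : v ∈ 𝒯.bag s) :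
    𝒯.InSubtree t s := by
  obtain ⟨⟨t', ⟨j, rfl⟩, hvt'⟩, hvt⟩ := hv
  obtain ⟨top, -, hchain⟩ := 𝒯.bags_connected v
  obtain ⟨n, rfl, hn⟩ := hchain t' hvt'
  obtain ⟨k, hk, -⟩ := hchain s hvs
  have hnj : n ≤ j := (not_le.1 fun hjn => hvt (hn j hjn)).le
  have htop : 𝒯.InSubtree (𝒯.parent^[j] t') (𝒯.parent^[n] t') :=
    ⟨j - n, by rw [← Function.iterate_add_apply, Nat.sub_add_cancel hnj]⟩
  exact htop.trans ⟨k, hk⟩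

theorem not_adj_of_mem_Lt_of_mem_Rt (hu : u ∈ 𝒯.Lt t) (hv : v ∈ 𝒯.Rt t) : ¬G.Adj u v := by
  intro huv
  obtain ⟨s, hus, hvs⟩ := 𝒯.bags_of_edges huv
  exact hv ⟨s, inSubtree_of_mem_Lt_of_mem_bag hu hus, hvs⟩

theorem disjoint_Lt_Rt : Disjoint (𝒯.Lt t) (𝒯.Rt t) :=
  disjoint_compl_right.mono_left Set.sdiff_subset

end Separation

section RootedOrder

variable {V ι : Type} [PartialOrder ι] [OrderBot ι] [PredOrder ι] [IsPredArchimedean ι]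
  {G : SimpleGraph V}

/-- The tree decomposition of `G` on a rooted tree given by its ancestor order: the root is `⊥` and
the parent map is `Order.pred`. The nodes whose bag contains a given vertex form a subtree when they
have a least element and are order-connected. -/
def ofRootedOrder (G : SimpleGraph V) (bag : ι → Set V)
    (hedge : ∀ ⦃u v⦄, G.Adj u v → ∃ t, u ∈ bag t ∧ v ∈ bag t)
    (hsubtree : ∀ v, {t | v ∈ bag t}.OrdConnected ∧ ∃ m, IsLeast {t | v ∈ bag t} m) :
    RootedTreeDecomp V ι G where
  root := ⊥
  parent := Order.pred
  parent_root := Order.pred_bot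
  reaches_root _ := exists_pred_iterate_iff_le.2 bot_le
  bag := bag
  bags_cover v := (hsubtree v).2.imp fun _ hm => hm.1
  bags_of_edges := hedge
  bags_connected v := by
    obtain ⟨hconn, m, hm, hmin⟩ := hsubtree v
    refine ⟨m, hm, fun t ht => ?_⟩
    obtain ⟨n, rfl⟩ := exists_pred_iterate_iff_le.2 (hmin ht)
    exact ⟨n, rfl, fun i hi => hconn.out hm ht
      ⟨Function.antitone_iterate_of_le_id Order.pred_le hi t, Order.pred_iterate_le i t⟩⟩

theorem Vt_ofRootedOrder {bag : ι → Set V} {hedge hsubtree} (s : ι) :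
    (ofRootedOrder G bag hedge hsubtree).Vt s = ⋃ t ≥ s, bag t := by
  ext v
  simp only [Set.mem_iUnion, exists_prop]
  exact exists_congr fun t => and_congr_left' exists_pred_iterate_iff_le

end RootedOrder

section SeparatorPath

variable {V : Type} {G : SimpleGraph V} {L R : Set V}

/-- The bags `V ∖ L`, `V ∖ (L ∪ R)`, `V ∖ R` of `separatorPath`, in order from the root. -/
def separatorBag (L R : Set V) : Fin 3 → Set V := ![Lᶜ, (L ∪ R)ᶜ, Rᶜ]

theorem exists_mem_separatorBag_of_adj (hLR : Disjoint L R)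
    (hedge : ∀ l ∈ L, ∀ r ∈ R, ¬G.Adj l r) {u v : V} (huv : G.Adj u v) :
    ∃ t, u ∈ separatorBag L R t ∧ v ∈ separatorBag L R t := by
  by_cases hu : u ∈ L
  · exact ⟨2, hLR.notMem_of_mem_left hu, fun hv => hedge u hu v hv huv⟩
  by_cases hv : v ∈ L
  · exact ⟨2, fun hu => hedge v hv u hu huv.symm, hLR.notMem_of_mem_left hv⟩
  · exact ⟨0, hu, hv⟩

theorem setOf_mem_separatorBag_eq_Ici_or_Iic_or_univ (hLR : Disjoint L R) (v : V) :
    {t | v ∈ separatorBag L R t} = Set.Ici 2 ∨ {t | v ∈ separatorBag L R t} = Set.Iic 0 ∨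
      {t | v ∈ separatorBag L R t} = Set.univ := by
  by_cases hL : v ∈ L
  · have hR : v ∉ R := hLR.notMem_of_mem_left hL
    left
    ext t
    fin_cases t <;> simp [separatorBag, hL, hR]
  by_cases hR : v ∈ R
  · right; left
    ext t
    fin_cases t <;> simp [separatorBag, hL, hR]
  · right; right
    ext t
    fin_cases t <;> simp [separatorBag, hL, hR]

theorem ordConnected_and_exists_isLeast_separatorBag (hLR : Disjoint L R) (v : V) :
    {t | v ∈ separatorBag L R t}.OrdConnected ∧
      ∃ m, IsLeast {t | v ∈ separatorBag L R t} m := by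
  rcases setOf_mem_separatorBag_eq_Ici_or_Iic_or_univ hLR v with h | h | h <;> rw [h]
  · exact ⟨Set.ordConnected_Ici, 2, isLeast_Ici⟩
  · exact ⟨Set.ordConnected_Iic, 0, Set.self_mem_Iic, fun _ _ => Fin.zero_le _⟩
  · exact ⟨Set.ordConnected_univ, 0, isLeast_univ⟩

/-- The path decomposition with bags `separatorBag L R`, rooted at its first node, for
disjoint vertex sets `L` and `R` with no edge between them. -/
noncomputable def separatorPath (hLR : Disjoint L R) (hedge : ∀ l ∈ L, ∀ r ∈ R, ¬G.Adj l r) :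
    RootedTreeDecomp V (Fin 3) G :=
  ofRootedOrder G (separatorBag L R) (fun _ _ => exists_mem_separatorBag_of_adj hLR hedge)
    (ordConnected_and_exists_isLeast_separatorBag hLR)

variable (hLR : Disjoint L R) (hedge : ∀ l ∈ L, ∀ r ∈ R, ¬G.Adj l r)

theorem Vt_separatorPath : (separatorPath hLR hedge).Vt 1 = Rᶜ := by
  rw [separatorPath, Vt_ofRootedOrder]
  ext v
  simp [Fin.exists_fin_succ, separatorBag]

theorem bag_separatorPath : (separatorPath hLR hedge).bag 1 = (L ∪ R)ᶜ := rfl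

theorem Rt_separatorPath : (separatorPath hLR hedge).Rt 1 = R := by
  rw [Rt, Vt_separatorPath, compl_compl]

theorem Lt_separatorPath : (separatorPath hLR hedge).Lt 1 = L := by
  rw [Lt, Vt_separatorPath, bag_separatorPath, compl_sdiff_compl, Set.union_sdiff_right,
    hLR.sdiff_eq_left]

end SeparatorPath

end RootedTreeDecomp

theorem statement1_general {V : Type} (G : SimpleGraph V) (S L X R : Set V)
    (hLX : Disjoint L X) (hXR : Disjoint X R) (hUnion : L ∪ X ∪ R = S) :
    (∃ (ι : Type) (𝒯 : RootedTreeDecomp V ι G) (t : ι),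
        𝒯.LS S t = L ∧ 𝒯.XS S t = X ∧ 𝒯.RS S t = R) ↔
      ¬∃ l ∈ L, ∃ r ∈ R, G.ReachableIn (S \ X) l r := by
  have hLS : L ⊆ S := hUnion ▸ Set.subset_union_left.trans Set.subset_union_left
  have hRS : R ⊆ S := hUnion ▸ Set.subset_union_right
  have hXS : X ⊆ S := hUnion ▸ Set.subset_union_right.trans Set.subset_union_left
  have hdiff : S \ X = L ∪ R := by
    rw [← hUnion, Set.union_sdiff_distrib, Set.union_sdiff_right, hLX.sdiff_eq_left,
      hXR.sdiff_eq_right]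
  rw [hdiff, not_exists_reachableIn_union_iff]
  constructor
  · rintro ⟨ι, 𝒯, t, rfl, -, rfl⟩
    exact ⟨RootedTreeDecomp.disjoint_Lt_Rt.mono Set.inter_subset_left Set.inter_subset_left,
      fun l hl r hr => RootedTreeDecomp.not_adj_of_mem_Lt_of_mem_Rt hl.1 hr.1⟩
  · rintro ⟨hLR, hedge⟩
    refine ⟨Fin 3, .separatorPath hLR hedge, 1, ?_, ?_, ?_⟩
    · rw [RootedTreeDecomp.LS, RootedTreeDecomp.Lt_separatorPath, Set.inter_eq_left.2 hLS]
    · rw [RootedTreeDecomp.XS, RootedTreeDecomp.bag_separatorPath, Set.inter_comm,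
        ← Set.sdiff_eq, ← hdiff, Set.sdiff_sdiff_cancel_left hXS]
    · rw [RootedTreeDecomp.RS, RootedTreeDecomp.Rt_separatorPath, Set.inter_eq_left.2 hRS]

/-- A partition `(L, X, R)` of `S` is an `S`-trace of `G` if and
only if there is no path from a vertex of `L` to a vertex of `R` in `G[S] − X`. -/
theorem statement1 {V : Type} [Fintype V] [DecidableEq V] (G : SimpleGraph V)
    (S L X R : Set V)
    (hLX : Disjoint L X) (hLR : Disjoint L R) (hXR : Disjoint X R)
    (hUnion : L ∪ X ∪ R = S) :
    (∃ (ι : Type) (𝒯 : RootedTreeDecomp V ι G) (t : ι),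
        𝒯.LS S t = L ∧ 𝒯.XS S t = X ∧ 𝒯.RS S t = R) ↔
      ¬∃ l ∈ L, ∃ r ∈ R, G.ReachableIn (S \ X) l r :=
  statement1_general G S L X R hLX hXR hUnion
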